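/- arXiv:1511.00478 — 3 statements merged into one kernel-verified Lean document; each statement's English description precedes it below -/
import Mathlib

section
/- Let n be a positive integer and write 2n+3 = 5^β·n₁ with n₁ a positive integer not divisible by 5. Then t(1,1,5,5;n) = (4/3)·(5^(β+1) − 3)·σ(n₁) − (8/3)·c(2n+3). -/
/-!
Write `Θ(q) = ∑ q^{x(x-1)/2}` over all integers `x`, `Θ = Θ(q)`, `Θ₅ = Θ(q⁵)` and
`E(q) = ∏ (1 - qⁿ)`. The generating function of `t(1,1,5,5;n)` is `Θ² Θ₅²`, and the theorem is read
off from two identities.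

* Legendre's theorem `Θ⁴ = 16 ∑ σ(2n+1) qⁿ` (`theta_pow_four`). It is equivalent to the recurrence
  `∑ (i - 4j) σ(2i+1) r(j) = 0` over `i + j = n`, with `r(j)` the coefficients of `Θ`, because this
  recurrence says that `Θ⁴` and `∑ σ(2n+1) qⁿ` have the same logarithmic derivative. The left side
  of the recurrence is half the sum of `a(ab - x²)` over the forms `aX² + xXY - bY²` of discriminant
  `8n + 5` with `a, b > 0`, and that sum vanishes by elementary involutions in the style of
  Liouville (`sum_forms`).

* `Θ⁴ - 6qΘ²Θ₅² + 5q²Θ₅⁴ = 16 E(q)² E(q⁵)²` (`theta_identity`). Let `S_k` be the part of `Θ²` from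
  the pairs `(x, y)` with `2x + y ≡ k` modulo `5`. Multiplication by `i` on the Gaussian integers
  `(2x-1) + (2y-1)i` gives `S₀ = S₁ = S₂ = S₃`; the prime `2 + i` above `5` gives `S₄ = qΘ₅²` and
  writes `S₀` as a product of two theta functions with base `q⁵`. For a primitive fifth root of
  unity `ζ`, the difference `S₄ - S₀` is `ζ²` times the product of the theta functions
  `∑ ζ^{4x} q^{x(x-1)/2}` and `∑ ζ^{2x} q^{x(x-1)/2}`. By the Jacobi triple product (`jac_eq_prod`)
  `S₀` and `S₀ - S₄` are infinite products, and `S₀ (S₀ - S₄) = E(q)² E(q⁵)²`. The left side of the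
  identity is `(Θ² - qΘ₅²)(Θ² - 5qΘ₅²) = 4S₀ · 4(S₀ - S₄)`.

Replacing `q` by `q²` and multiplying by `q`, comparison of the coefficients at `N = 2n + 3` gives
`16 c(N) = 16 σ(N) + 80 σ(N/5) - 6 t(n)` (`coeff_identity`), and the multiplicativity of `σ`
finishes the proof.
-/

open scoped BigOperators

/-- `Nquad a b c d n` is the number of quadruples `(x,y,z,w) ∈ ℤ⁴` with
`n = a*x^2 + b*y^2 + c*z^2 + d*w^2`. -/
noncomputable def Nquad (a b c d : ℕ) (n : ℕ) : ℕ :=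
  Nat.card {p : ℤ × ℤ × ℤ × ℤ //
    (n : ℤ) = a * p.1 ^ 2 + b * p.2.1 ^ 2 + c * p.2.2.1 ^ 2 + d * p.2.2.2 ^ 2}

/-- `tquad a b c d n` is the number of quadruples `(x,y,z,w) ∈ ℤ⁴` with
`n = a*x(x-1)/2 + b*y(y-1)/2 + c*z(z-1)/2 + d*w(w-1)/2`. -/
noncomputable def tquad (a b c d : ℕ) (n : ℕ) : ℕ :=
  Nat.card {p : ℤ × ℤ × ℤ × ℤ //
    (n : ℤ) = a * (p.1 * (p.1 - 1) / 2) + b * (p.2.1 * (p.2.1 - 1) / 2)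
      + c * (p.2.2.1 * (p.2.2.1 - 1) / 2) + d * (p.2.2.2 * (p.2.2.2 - 1) / 2)}

/-! ### Sums of four triangular numbers -/

/-- The triangular number `x(x-1)/2`, as a natural number, for an arbitrary integer `x`. -/
def tri (x : ℤ) : ℕ := (x * (x - 1) / 2).toNat

theorem two_mul_tri (x : ℤ) : 2 * (tri x : ℤ) = x * (x - 1) := by
  have h2 : 2 * (x * (x - 1) / 2) = x * (x - 1) :=
    Int.mul_ediv_cancel' (by
      rcases Int.even_or_odd' x with ⟨k, rfl | rfl⟩
      · exact ⟨k * (2 * k - 1), by ring⟩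
      · exact ⟨(2 * k + 1) * k, by ring⟩)
  have h0 : 0 ≤ x * (x - 1) := by
    rcases le_or_gt x 0 with h | h
    · nlinarith
    · exact mul_nonneg (by omega) (by omega)
  unfold tri
  rw [Int.toNat_of_nonneg (by omega), h2]

theorem tri_eq_iff (x : ℤ) (j : ℕ) : tri x = j ↔ x * (x - 1) = 2 * j := by
  have := two_mul_tri x
  omega

/-- The integral binary quadratic forms `aX² + xXY - bY²` with `a, b > 0` and discriminant `L`. -/
noncomputable def forms (L : ℤ) : Finset (ℤ × ℤ × ℤ) :=
  (Finset.Icc 1 L ×ˢ Finset.Icc (-L) L ×ˢ Finset.Icc 1 L).filter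
    fun p => p.2.1 ^ 2 + 4 * p.1 * p.2.2 = L

theorem mem_forms {L a x b : ℤ} :
    (a, x, b) ∈ forms L ↔ 0 < a ∧ 0 < b ∧ x ^ 2 + 4 * a * b = L := by
  simp only [forms, Finset.mem_filter, Finset.mem_product, Finset.mem_Icc]
  constructor
  · rintro ⟨⟨⟨h1, h2⟩, ⟨h3, h4⟩, h5, h6⟩, h⟩
    exact ⟨by omega, by omega, h⟩
  · rintro ⟨ha, hb, h⟩
    have hab : 0 < a * b := mul_pos ha hb
    refine ⟨⟨⟨by omega, ?_⟩, ⟨?_, ?_⟩, by omega, ?_⟩, h⟩ <;>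
      nlinarith [sq_nonneg x, sq_nonneg (x - 1), sq_nonneg (x + 1)]

/-- A weight on forms which is invariant under `(a, x, b) ↦ (b, -x, a)` and changes sign under
`(a, x, b) ↦ (a, -x - 2a, b - a - x)`. -/
def wt (p : ℤ × ℤ × ℤ) : ℤ :=
  (p.1 + p.2.2) * (p.1 * p.2.2 - p.2.1 ^ 2) - p.2.1 * (p.1 ^ 2 - p.2.2 ^ 2)

/-- The involution `(a, x, b) ↦ (a, -x - 2a, b - a - x)` preserves the forms with `a + x < b` and
negates the weight. -/
theorem sum_wt_half (L : ℤ) :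
    ∑ p ∈ (forms L).filter (fun p => p.1 + p.2.1 < p.2.2), wt p = 0 := by
  have h : ∑ p ∈ (forms L).filter (fun p => p.1 + p.2.1 < p.2.2), wt p =
      ∑ p ∈ (forms L).filter (fun p => p.1 + p.2.1 < p.2.2), -wt p := by
    refine Finset.sum_nbij' (fun p => (p.1, -p.2.1 - 2 * p.1, p.2.2 - p.1 - p.2.1))
      (fun p => (p.1, -p.2.1 - 2 * p.1, p.2.2 - p.1 - p.2.1)) ?_ ?_ ?_ ?_ ?_
    · rintro ⟨a, x, b⟩ hp
      simp only [Finset.mem_filter, mem_forms] at hp ⊢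
      obtain ⟨⟨ha, hb, h⟩, hlt⟩ := hp
      exact ⟨⟨ha, by linarith, by rw [← h]; ring⟩, by linarith⟩
    · rintro ⟨a, x, b⟩ hp
      simp only [Finset.mem_filter, mem_forms] at hp ⊢
      obtain ⟨⟨ha, hb, h⟩, hlt⟩ := hp
      exact ⟨⟨ha, by linarith, by rw [← h]; ring⟩, by linarith⟩
    · rintro ⟨a, x, b⟩ -
      simp only [Prod.mk.injEq, true_and]
      constructor <;> ring
    · rintro ⟨a, x, b⟩ -
      simp only [Prod.mk.injEq, true_and]
      constructor <;> ring
    · rintro ⟨a, x, b⟩ -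
      simp only [wt]
      ring
  rw [Finset.sum_neg_distrib] at h
  linarith

/-- For `L ≡ 5` modulo `8` the involution `(a, x, b) ↦ (b, -x, a)` exchanges the forms with
`a + x < b` and those with `b < a + x`, so both halves of the sum vanish. -/
theorem sum_wt {L : ℤ} (hL : L % 8 = 5) : ∑ p ∈ forms L, wt p = 0 := by
  rw [← Finset.sum_filter_add_sum_filter_not _ (fun p => p.1 + p.2.1 < p.2.2), sum_wt_half,
    zero_add, ← sum_wt_half L]
  refine Finset.sum_nbij' (fun p => (p.2.2, -p.2.1, p.1)) (fun p => (p.2.2, -p.2.1, p.1))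
    ?_ ?_ ?_ ?_ ?_
  · rintro ⟨a, x, b⟩ hp
    simp only [Finset.mem_filter, mem_forms] at hp ⊢
    obtain ⟨⟨ha, hb, h⟩, hlt⟩ := hp
    refine ⟨⟨hb, ha, by rw [← h]; ring⟩, ?_⟩
    -- `a + x = b` would make `L = (x + 2a)²` a square, but squares are not `5` modulo `8`
    have hne : a + x ≠ b := by
      rintro rfl
      have h' : (x + 2 * a) ^ 2 = L := by rw [← h]; ring
      rw [← h', pow_two, Int.mul_emod] at hL
      have h1 := Int.emod_nonneg (x + 2 * a) (show (8 : ℤ) ≠ 0 by norm_num)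
      have h2 := Int.emod_lt_of_pos (x + 2 * a) (show (0 : ℤ) < 8 by norm_num)
      generalize (x + 2 * a) % 8 = r at *
      interval_cases r <;> omega
    omega
  · rintro ⟨a, x, b⟩ hp
    simp only [Finset.mem_filter, mem_forms] at hp ⊢
    obtain ⟨⟨ha, hb, h⟩, hlt⟩ := hp
    exact ⟨⟨hb, ha, by rw [← h]; ring⟩, by omega⟩
  · rintro ⟨a, x, b⟩ -
    simp
  · rintro ⟨a, x, b⟩ -
    simp
  · rintro ⟨a, x, b⟩ -
    simp only [wt]
    ring

theorem sum_forms {L : ℤ} (hL : L % 8 = 5) :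
    ∑ p ∈ forms L, p.1 * (p.1 * p.2.2 - p.2.1 ^ 2) = 0 := by
  have h1 : ∑ p ∈ forms L, p.1 * (p.1 * p.2.2 - p.2.1 ^ 2) =
      ∑ p ∈ forms L, p.2.2 * (p.1 * p.2.2 - p.2.1 ^ 2) := by
    refine Finset.sum_nbij' (fun p => (p.2.2, p.2.1, p.1)) (fun p => (p.2.2, p.2.1, p.1))
      ?_ ?_ ?_ ?_ ?_
    · rintro ⟨a, x, b⟩ hp
      rw [mem_forms] at hp ⊢
      exact ⟨hp.2.1, hp.1, by rw [← hp.2.2]; ring⟩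
    · rintro ⟨a, x, b⟩ hp
      rw [mem_forms] at hp ⊢
      exact ⟨hp.2.1, hp.1, by rw [← hp.2.2]; ring⟩
    · simp
    · simp
    · rintro ⟨a, x, b⟩ -
      simp only
      ring
  have h2 : ∑ p ∈ forms L, p.2.1 * (p.1 ^ 2 - p.2.2 ^ 2) =
      ∑ p ∈ forms L, -(p.2.1 * (p.1 ^ 2 - p.2.2 ^ 2)) := by
    refine Finset.sum_nbij' (fun p => (p.1, -p.2.1, p.2.2)) (fun p => (p.1, -p.2.1, p.2.2))
      ?_ ?_ ?_ ?_ ?_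
    · rintro ⟨a, x, b⟩ hp
      rw [mem_forms] at hp ⊢
      exact ⟨hp.1, hp.2.1, by rw [← hp.2.2]; ring⟩
    · rintro ⟨a, x, b⟩ hp
      rw [mem_forms] at hp ⊢
      exact ⟨hp.1, hp.2.1, by rw [← hp.2.2]; ring⟩
    · simp
    · simp
    · rintro ⟨a, x, b⟩ -
      simp only
      ring
  have h3 := sum_wt hL
  simp only [wt, add_mul, Finset.sum_sub_distrib, Finset.sum_add_distrib] at h3
  rw [Finset.sum_neg_distrib] at h2
  linarith

/-- The finite set of integers `x` with `x(x-1)/2 = j`. -/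
noncomputable def triFiber (j : ℕ) : Finset ℤ :=
  (Finset.Icc (-j : ℤ) (j + 1)).filter fun x => tri x = j

theorem mem_triFiber {j : ℕ} {x : ℤ} : x ∈ triFiber j ↔ tri x = j := by
  simp only [triFiber, Finset.mem_filter, Finset.mem_Icc, and_iff_right_iff_imp]
  rw [tri_eq_iff]
  intro h
  constructor <;> by_contra! hc <;> nlinarith

/-- The logarithmic-derivative recurrence satisfied by `σ(2i+1)`, obtained by sorting the forms of
discriminant `8n + 5` according to their middle coefficient `2x - 1`. -/
theorem sigma_recurrence (n : ℕ) :
    ∑ p ∈ Finset.HasAntidiagonal.antidiagonal n, ((p.1 : ℤ) - 4 * p.2) *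
      ((∑ d ∈ (2 * p.1 + 1).divisors, (d : ℤ)) * (triFiber p.2).card) = 0 := by
  have key : ∑ p ∈ Finset.HasAntidiagonal.antidiagonal n, 2 * (((p.1 : ℤ) - 4 * p.2) *
      ((∑ d ∈ (2 * p.1 + 1).divisors, (d : ℤ)) * (triFiber p.2).card)) =
      ∑ p ∈ forms (8 * n + 5), p.1 * (p.1 * p.2.2 - p.2.1 ^ 2) := by
    have h1 : ∀ p ∈ Finset.HasAntidiagonal.antidiagonal n, 2 * (((p.1 : ℤ) - 4 * p.2) *
        ((∑ d ∈ (2 * p.1 + 1).divisors, (d : ℤ)) * (triFiber p.2).card)) =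
        ∑ r ∈ (2 * p.1 + 1).divisorsAntidiagonal ×ˢ triFiber p.2,
          2 * ((p.1 : ℤ) - 4 * p.2) * r.1.1 := by
      intro p _
      rw [Finset.sum_product, ← Nat.sum_divisorsAntidiagonal (fun d _ => (d : ℤ))]
      simp only [Finset.sum_const, nsmul_eq_mul, ← Finset.mul_sum]
      ring
    rw [Finset.sum_congr rfl h1, Finset.sum_sigma']
    refine Finset.sum_bij'
      (i := fun s _ => ((s.2.1.1 : ℤ), 2 * s.2.2 - 1, (s.2.1.2 : ℤ)))
      (j := fun p _ => ⟨(((p.1 * p.2.2 - 1) / 2).toNat, tri ((p.2.1 + 1) / 2)),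
        ((p.1.toNat, p.2.2.toNat), (p.2.1 + 1) / 2)⟩) ?_ ?_ ?_ ?_ ?_
    · rintro ⟨⟨i, j⟩, ⟨d, e⟩, x⟩ hs
      simp only [Finset.mem_sigma, Finset.HasAntidiagonal.mem_antidiagonal, Finset.mem_product,
        Nat.mem_divisorsAntidiagonal, mem_triFiber] at hs
      obtain ⟨hij, ⟨hde, -⟩, hx⟩ := hs
      rw [tri_eq_iff] at hx
      have hde' : (d : ℤ) * e = 2 * i + 1 := by exact_mod_cast hde
      have hij' : (i : ℤ) + j = n := by exact_mod_cast hij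
      rw [mem_forms]
      refine ⟨?_, ?_, by linear_combination 4 * hx + 4 * hde' + 8 * hij'⟩
      · rcases Nat.eq_zero_or_pos d with rfl | h
        · simp at hde
        · exact_mod_cast h
      · rcases Nat.eq_zero_or_pos e with rfl | h
        · simp at hde
        · exact_mod_cast h
    · rintro ⟨a, y, b⟩ hp
      obtain ⟨ha, hb, h⟩ := mem_forms.1 hp
      lift a to ℕ using ha.le
      lift b to ℕ using hb.le
      obtain ⟨x, rfl⟩ : ∃ x, y = 2 * x - 1 := by
        rcases Int.even_or_odd' y with ⟨k, rfl | rfl⟩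
        · exfalso
          ring_nf at h
          omega
        · exact ⟨k + 1, by ring⟩
      have hx := two_mul_tri x
      have hab : (a : ℤ) * b = 2 * (n - tri x) + 1 := by linarith
      have hle : 0 ≤ (n : ℤ) - tri x := by
        have := mul_pos ha hb
        omega
      obtain ⟨i, hi⟩ := Int.eq_ofNat_of_zero_le hle
      have e1 : (2 * x - 1 + 1) / 2 = x := by omega
      have e2 : (((a : ℤ) * b - 1) / 2).toNat = i := by rw [hab]; omega
      simp only [Finset.mem_sigma, Finset.HasAntidiagonal.mem_antidiagonal, Finset.mem_product,
        Nat.mem_divisorsAntidiagonal, mem_triFiber, e1, e2, Int.toNat_natCast]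
      refine ⟨by omega, ⟨?_, by omega⟩, trivial⟩
      zify
      rw [hab, hi]
    · rintro ⟨⟨i, j⟩, ⟨d, e⟩, x⟩ hs
      simp only [Finset.mem_sigma, Finset.HasAntidiagonal.mem_antidiagonal, Finset.mem_product,
        Nat.mem_divisorsAntidiagonal, mem_triFiber] at hs
      obtain ⟨hij, ⟨hde, -⟩, rfl⟩ := hs
      have hde' : (d : ℤ) * e = 2 * i + 1 := by exact_mod_cast hde
      have e1 : (2 * x - 1 + 1) / 2 = x := by omega
      have e2 : (((d : ℤ) * e - 1) / 2).toNat = i := by rw [hde']; omega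
      simp only [e1, e2, Int.toNat_natCast]
    · rintro ⟨a, y, b⟩ hp
      obtain ⟨ha, hb, h⟩ := mem_forms.1 hp
      have hy : y % 2 = 1 := by
        rcases Int.even_or_odd' y with ⟨k, rfl | rfl⟩
        · exfalso
          ring_nf at h
          omega
        · omega
      simp only [Prod.mk.injEq]
      omega
    · rintro ⟨⟨i, j⟩, ⟨d, e⟩, x⟩ hs
      simp only [Finset.mem_sigma, Finset.HasAntidiagonal.mem_antidiagonal, Finset.mem_product,
        Nat.mem_divisorsAntidiagonal, mem_triFiber] at hs
      obtain ⟨hij, ⟨hde, -⟩, hx⟩ := hs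
      rw [tri_eq_iff] at hx
      have hde' : (d : ℤ) * e = 2 * i + 1 := by exact_mod_cast hde
      simp only
      linear_combination (4 * (d : ℤ)) * hx - (d : ℤ) * hde'
  rw [sum_forms (by omega), ← Finset.mul_sum] at key
  omega

/-- `∑_x q^{x(x-1)/2}` over all integers `x`, as a formal power series. -/
noncomputable def thetaSeries : PowerSeries ℂ := PowerSeries.mk fun j => ((triFiber j).card : ℂ)

/-- `∑_n σ(2n+1) qⁿ` as a formal power series. -/
noncomputable def sigmaSeries : PowerSeries ℂ :=
  PowerSeries.mk fun n => ∑ d ∈ (2 * n + 1).divisors, (d : ℂ)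

open PowerSeries in
/-- `S' Θ = 4 S Θ'` for `S = ∑ σ(2n+1) qⁿ` and `Θ = ∑ q^{x(x-1)/2}`, that is, `Θ⁴ / S` is
constant. -/
theorem derivative_relation :
    d⁄dX ℂ sigmaSeries * thetaSeries = 4 * (sigmaSeries * d⁄dX ℂ thetaSeries) := by
  have h : (X : PowerSeries ℂ) * (d⁄dX ℂ sigmaSeries * thetaSeries) =
      X * (4 * (sigmaSeries * d⁄dX ℂ thetaSeries)) := by
    have hX : ∀ f : PowerSeries ℂ, X * d⁄dX ℂ f = mk fun n => (n : ℂ) * coeff n f := by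
      intro f
      ext n
      cases n with
      | zero => simp
      | succ n => simp [coeff_succ_X_mul, coeff_derivative, mul_comm]
    rw [← mul_assoc, hX, show X * (4 * (sigmaSeries * d⁄dX ℂ thetaSeries)) =
      C (4 : ℂ) * (sigmaSeries * (X * d⁄dX ℂ thetaSeries)) by rw [map_ofNat]; ring, hX]
    ext n
    rw [coeff_C_mul, coeff_mul, coeff_mul, ← sub_eq_zero, Finset.mul_sum,
      ← Finset.sum_sub_distrib]
    have hrec : ((∑ p ∈ Finset.HasAntidiagonal.antidiagonal n, ((p.1 : ℤ) - 4 * p.2) *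
      ((∑ d ∈ (2 * p.1 + 1).divisors, (d : ℤ)) * (triFiber p.2).card) : ℤ) : ℂ) = 0 := by
      rw [sigma_recurrence, Int.cast_zero]
    rw [← hrec]
    push_cast
    refine Finset.sum_congr rfl fun p _ => ?_
    simp only [sigmaSeries, thetaSeries, coeff_mk]
    ring
  exact mul_left_cancel₀ X_ne_zero h

open PowerSeries in
/-- Legendre's theorem on sums of four triangular numbers. -/
theorem theta_pow_four : thetaSeries ^ 4 = 16 * sigmaSeries := by
  have hc : constantCoeff sigmaSeries = 1 := by
    simp [sigmaSeries, ← coeff_zero_eq_constantCoeff_apply]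
  have hfib : triFiber 0 = {0, 1} := by
    ext x
    rw [mem_triFiber, tri_eq_iff]
    simp [sub_eq_zero]
  have ht : constantCoeff thetaSeries = 2 := by
    rw [← coeff_zero_eq_constantCoeff_apply, thetaSeries, coeff_mk, hfib]
    simp
  have hne : constantCoeff sigmaSeries ≠ 0 := by rw [hc]; exact one_ne_zero
  have hinv : sigmaSeries * sigmaSeries⁻¹ = 1 := PowerSeries.mul_inv_cancel _ hne
  have hmain : thetaSeries ^ 4 * sigmaSeries⁻¹ = 16 := by
    refine derivative.ext ?_ ?_
    · have h16 : d⁄dX ℂ (16 : PowerSeries ℂ) = 0 := by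
        rw [show (16 : PowerSeries ℂ) = C (16 : ℂ) by rw [map_ofNat], derivative_C]
      rw [h16, Derivation.leibniz, derivative_inv', Derivation.leibniz_pow]
      simp only [smul_eq_mul, nsmul_eq_mul]
      have := derivative_relation
      linear_combination (-thetaSeries ^ 3 * sigmaSeries⁻¹ ^ 2) * this -
        (4 * thetaSeries ^ 3 * d⁄dX ℂ thetaSeries * sigmaSeries⁻¹) * hinv
    · rw [map_mul, map_pow, ht, constantCoeff_inv, hc, map_ofNat]
      norm_num
  linear_combination sigmaSeries * hmain - thetaSeries ^ 4 * hinv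

/-! ### The Jacobi triple product -/

open Filter Topology

theorem zpow_tri_succ {q : ℂ} (hq0 : q ≠ 0) (k : ℤ) :
    q ^ tri (k + 1) = q ^ tri k * q ^ k := by
  have h : (tri (k + 1) : ℤ) = tri k + k := by
    have h1 := two_mul_tri k
    have h2 := two_mul_tri (k + 1)
    have h3 : 2 * (tri (k + 1) : ℤ) = 2 * (tri k + k) := by
      linear_combination h2 - h1
    omega
  rw [← zpow_natCast, h, zpow_add₀ hq0, zpow_natCast]

theorem tri_one_sub (x : ℤ) : tri (1 - x) = tri x := by
  rw [tri_eq_iff, two_mul_tri]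
  ring

/-- `pochInf c q = ∏_{n ≥ 0} (1 + c qⁿ)`. -/
noncomputable def pochInf (c q : ℂ) : ℂ := ∏' n : ℕ, (1 + c * q ^ n)

theorem summable_pochInf (c : ℂ) {q : ℂ} (hq : ‖q‖ < 1) : Summable fun n : ℕ => ‖c * q ^ n‖ := by
  simp_rw [norm_mul, norm_pow]
  exact (summable_geometric_of_lt_one (norm_nonneg _) hq).mul_left _

theorem multipliable_pochInf (c : ℂ) {q : ℂ} (hq : ‖q‖ < 1) :
    Multipliable fun n : ℕ => 1 + c * q ^ n :=
  multipliable_one_add_of_summable (summable_pochInf c hq)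

theorem tendsto_pochInf (c : ℂ) {q : ℂ} (hq : ‖q‖ < 1) :
    Tendsto (fun n => ∏ i ∈ Finset.range n, (1 + c * q ^ i)) atTop (𝓝 (pochInf c q)) :=
  (multipliable_pochInf c hq).hasProd.tendsto_prod_nat

theorem one_add_ne_zero_of_norm_lt {c q : ℂ} (hq : ‖q‖ < 1) (hc : ‖c‖ < 1) (n : ℕ) :
    1 + c * q ^ n ≠ 0 := by
  intro h
  have h1 : c * q ^ n = -1 := by linear_combination h
  have h2 : ‖c * q ^ n‖ < 1 := by
    rw [norm_mul, norm_pow]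
    exact mul_lt_one_of_nonneg_of_lt_one_left (norm_nonneg _) hc
      (pow_le_one₀ (norm_nonneg _) hq.le)
  rw [h1] at h2
  simp at h2

theorem pochInf_ne_zero {c q : ℂ} (hq : ‖q‖ < 1) (hc : ‖c‖ < 1) : pochInf c q ≠ 0 :=
  tprod_one_add_ne_zero_of_summable (one_add_ne_zero_of_norm_lt hq hc) (summable_pochInf c hq)

theorem pochInf_step (c : ℂ) {q : ℂ} (hq : ‖q‖ < 1) :
    pochInf c q = (1 + c) * pochInf (c * q) q := by
  have h1 := (tendsto_pochInf c hq).comp (tendsto_add_atTop_nat 1)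
  have h2 := (tendsto_pochInf (c * q) hq).const_mul (1 + c)
  refine tendsto_nhds_unique h1 (h2.congr fun n => ?_)
  simp only [Function.comp, Finset.prod_range_succ' _ n, pow_zero, mul_one, pow_succ']
  rw [mul_comm]
  simp only [mul_assoc]

/-- The theta function `∑_{x ∈ ℤ} zˣ q^{x(x-1)/2}`. -/
noncomputable def jac (z q : ℂ) : ℂ := ∑' x : ℤ, z ^ x * q ^ tri x

theorem summable_jac {z q : ℂ} (hz : z ≠ 0) (hq0 : q ≠ 0) (hq : ‖q‖ < 1) :
    Summable fun x : ℤ => ‖z ^ x * q ^ tri x‖ := by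
  have hnat : ∀ w : ℂ, w ≠ 0 → Summable fun n : ℕ => ‖w ^ n * q ^ tri n‖ := by
    intro w hw
    refine summable_of_ratio_test_tendsto_lt_one (l := 0) one_pos
      (Eventually.of_forall fun n => ?_) ?_
    · exact norm_ne_zero_iff.2 (mul_ne_zero (pow_ne_zero _ hw) (pow_ne_zero _ hq0))
    · have h := (tendsto_pow_atTop_nhds_zero_of_norm_lt_one hq).norm.const_mul ‖w‖
      rw [norm_zero, mul_zero] at h
      refine h.congr fun n => ?_
      have hn : ‖w ^ n * q ^ tri n‖ ≠ 0 :=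
        norm_ne_zero_iff.2 (mul_ne_zero (pow_ne_zero _ hw) (pow_ne_zero _ hq0))
      rw [norm_norm, norm_norm, eq_div_iff hn, Nat.cast_succ, zpow_tri_succ hq0, zpow_natCast,
        ← norm_mul, ← norm_mul]
      congr 1
      ring
  refine Summable.of_nat_of_neg ?_ ?_
  · exact (hnat z hz).congr fun n => by rw [zpow_natCast]
  · refine (hnat (q / z) (div_ne_zero hq0 hz)).congr fun n => ?_
    have h : tri (-(n : ℤ)) = tri (n + 1) := by rw [← tri_one_sub]; congr 1; ring
    rw [h, zpow_tri_succ hq0, zpow_natCast, zpow_neg, zpow_natCast, div_pow]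
    congr 1
    ring

/-- `qFac q m = (1 - q)(1 - q²)⋯(1 - q^m)`. -/
noncomputable def qFac (q : ℂ) (m : ℕ) : ℂ := ∏ i ∈ Finset.range m, (1 + -q * q ^ i)

/-- The reciprocal of `qFac q m`, extended by `0` to negative `m`. -/
noncomputable def qFacInv (q : ℂ) (m : ℤ) : ℂ := if 0 ≤ m then (qFac q m.toNat)⁻¹ else 0

theorem qFac_ne_zero {q : ℂ} (hq : ‖q‖ < 1) (m : ℕ) : qFac q m ≠ 0 :=
  Finset.prod_ne_zero_iff.2 fun i _ => one_add_ne_zero_of_norm_lt hq (by rwa [norm_neg]) i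

theorem qFacInv_natCast (q : ℂ) (m : ℕ) : qFacInv q m = (qFac q m)⁻¹ := by
  simp [qFacInv]

theorem qFacInv_sub_one {q : ℂ} (hq : ‖q‖ < 1) (m : ℤ) :
    qFacInv q (m - 1) = (1 - q ^ m) * qFacInv q m := by
  rcases lt_trichotomy m 0 with h | rfl | h
  · rw [qFacInv, qFacInv, if_neg (by omega), if_neg (by omega), mul_zero]
  · simp [qFacInv]
  · obtain ⟨k, rfl⟩ : ∃ k : ℕ, m = (k + 1 : ℕ) := ⟨m.toNat - 1, by omega⟩
    have h1 : ((k + 1 : ℕ) : ℤ) - 1 = k := by push_cast; ring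
    have hs : qFac q (k + 1) = qFac q k * (1 - q ^ (k + 1)) := by
      rw [qFac, Finset.prod_range_succ, ← qFac]; ring
    have hne := qFac_ne_zero hq (k + 1)
    have hne' := qFac_ne_zero hq k
    rw [h1, qFacInv_natCast, qFacInv_natCast, zpow_natCast]
    rw [hs] at hne ⊢
    have hne2 := right_ne_zero_of_mul hne
    field_simp

/-- The finite form of the Jacobi triple product (the `q`-binomial theorem). -/
theorem hasSum_finite_triple {z q : ℂ} (hz : z ≠ 0) (hq0 : q ≠ 0) (hq : ‖q‖ < 1) (n : ℕ) :
    HasSum (fun k : ℤ => qFacInv q (n - k) * qFacInv q (n + k) * (z ^ k * q ^ tri k))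
      ((∏ i ∈ Finset.range n, (1 + z * q ^ i)) * (∏ i ∈ Finset.range n, (1 + z⁻¹ * q * q ^ i))
        * (qFac q (2 * n))⁻¹) := by
  induction n with
  | zero =>
    have h := hasSum_single (f := fun k : ℤ =>
      qFacInv q ((0 : ℕ) - k) * qFacInv q ((0 : ℕ) + k) * (z ^ k * q ^ tri k)) 0 ?_
    · convert h using 1
      simp [qFacInv, qFac, tri]
    · intro k hk
      rcases lt_or_gt_of_ne hk with h | h
      · simp [qFacInv, h.not_ge]
      · simp [qFacInv, h.not_ge]
  | succ n ih =>
    set a := fun k : ℤ => qFacInv q (n - k) * qFacInv q (n + k) * (z ^ k * q ^ tri k) with ha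
    have hm := (Equiv.subRight (1 : ℤ)).hasSum_iff.2 ih
    have hp := (Equiv.addRight (1 : ℤ)).hasSum_iff.2 ih
    have hF := ((ih.mul_left (1 + q ^ (2 * n + 1))).add (hm.mul_left (z * q ^ n))).add
      (hp.mul_left (z⁻¹ * q ^ (n + 1)))
    have hs : qFac q (2 * (n + 1)) =
        qFac q (2 * n) * ((1 - q ^ (2 * n + 1)) * (1 - q ^ (2 * n + 2))) := by
      rw [show 2 * (n + 1) = 2 * n + 1 + 1 by ring, qFac, Finset.prod_range_succ,
        Finset.prod_range_succ, ← qFac]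
      ring
    have hne := qFac_ne_zero hq (2 * (n + 1))
    rw [hs] at hne ⊢
    have hne1 := left_ne_zero_of_mul hne
    have hne2 := right_ne_zero_of_mul hne
    have hG := hF.mul_left ((1 - q ^ (2 * n + 1)) * (1 - q ^ (2 * n + 2)))⁻¹
    rw [show (fun k : ℤ => qFacInv q (((n + 1 : ℕ) : ℤ) - k) * qFacInv q (((n + 1 : ℕ) : ℤ) + k) *
        (z ^ k * q ^ tri k)) = _ from ?_, show (∏ i ∈ Finset.range (n + 1), (1 + z * q ^ i)) *
        (∏ i ∈ Finset.range (n + 1), (1 + z⁻¹ * q * q ^ i)) *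
        (qFac q (2 * n) * ((1 - q ^ (2 * n + 1)) * (1 - q ^ (2 * n + 2))))⁻¹ = _ from ?_]
    · exact hG
    · rw [Finset.prod_range_succ, Finset.prod_range_succ]
      field_simp
      ring
    · funext k
      rw [eq_inv_mul_iff_mul_eq₀ hne2]
      simp only [Function.comp, Equiv.subRight_apply, Equiv.coe_addRight, ha]
      have e1 : q ^ tri (k + 1) = q ^ tri k * q ^ k := zpow_tri_succ hq0 k
      have e2 : q ^ tri k = q ^ tri (k - 1) * q ^ (k - 1) := by
        simpa using zpow_tri_succ hq0 (k - 1)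
      set u := qFacInv q ((n : ℤ) + 1 - k) with hu
      set v := qFacInv q ((n : ℤ) + 1 + k) with hv
      have f1 : qFacInv q (n - k) = (1 - q ^ ((n : ℤ) + 1 - k)) * u := by
        rw [hu, ← qFacInv_sub_one hq]; congr 1; ring
      have f2 : qFacInv q (n + k) = (1 - q ^ ((n : ℤ) + 1 + k)) * v := by
        rw [hv, ← qFacInv_sub_one hq]; congr 1; ring
      have f3 : qFacInv q (n + (k - 1)) =
          (1 - q ^ ((n : ℤ) + k)) * ((1 - q ^ ((n : ℤ) + 1 + k)) * v) := by
        rw [← f2, ← qFacInv_sub_one hq]; congr 1; ring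
      have f4 : qFacInv q (n - (k + 1)) =
          (1 - q ^ ((n : ℤ) - k)) * ((1 - q ^ ((n : ℤ) + 1 - k)) * u) := by
        rw [← f1, ← qFacInv_sub_one hq]; congr 1; ring
      have f5 : qFacInv q (n - (k - 1)) = u := by rw [hu]; congr 1; ring
      have f6 : qFacInv q (n + (k + 1)) = v := by rw [hv]; congr 1; ring
      rw [f1, f2, f3, f4, f5, f6, e1, e2]
      push_cast
      rw [← hu, ← hv]
      have hk : q ^ k ≠ 0 := zpow_ne_zero _ hq0
      simp only [zpow_add₀ hq0, zpow_sub₀ hq0, zpow_add₀ hz, zpow_sub₀ hz, zpow_natCast, zpow_one]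
      field_simp
      ring

/-- **Jacobi triple product.** -/
theorem jac_eq_prod {z q : ℂ} (hz : z ≠ 0) (hq0 : q ≠ 0) (hq : ‖q‖ < 1) :
    jac z q = pochInf (-q) q * pochInf z q * pochInf (z⁻¹ * q) q := by
  have hE : pochInf (-q) q ≠ 0 := pochInf_ne_zero hq (by rwa [norm_neg])
  have hinv : Tendsto (fun m : ℕ => (qFac q m)⁻¹) atTop (𝓝 (pochInf (-q) q)⁻¹) :=
    (tendsto_pochInf (-q) hq).inv₀ hE
  obtain ⟨C, hC⟩ : ∃ C : ℝ, ∀ m : ℤ, ‖qFacInv q m‖ ≤ C := by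
    obtain ⟨C, hC⟩ := hinv.norm.bddAbove_range
    have hC' : ∀ m : ℕ, ‖(qFac q m)⁻¹‖ ≤ C := fun m => hC ⟨m, rfl⟩
    refine ⟨C, fun m => ?_⟩
    unfold qFacInv
    split_ifs
    · exact hC' _
    · rw [norm_zero]
      exact (norm_nonneg _).trans (hC' 0)
  have hshift : ∀ k : ℤ, Tendsto (fun n : ℕ => qFacInv q (n + k)) atTop
      (𝓝 (pochInf (-q) q)⁻¹) := by
    intro k
    have h1 : Tendsto (fun n : ℕ => ((n : ℤ) + k).toNat) atTop atTop := by
      refine tendsto_atTop.2 fun b => ?_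
      filter_upwards [eventually_ge_atTop (b + k.natAbs)] with n hn
      omega
    refine (hinv.comp h1).congr' ?_
    filter_upwards [eventually_ge_atTop k.natAbs] with n hn
    simp [qFacInv, show 0 ≤ (n : ℤ) + k by omega]
  have hlim1 := tendsto_tsum_of_dominated_convergence
    (f := fun (n : ℕ) (k : ℤ) => qFacInv q (n - k) * qFacInv q (n + k) * (z ^ k * q ^ tri k))
    (g := fun k : ℤ => (pochInf (-q) q)⁻¹ * (pochInf (-q) q)⁻¹ * (z ^ k * q ^ tri k))
    (bound := fun k : ℤ => C * C * ‖z ^ k * q ^ tri k‖) (𝓕 := atTop)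
    ((summable_jac hz hq0 hq).mul_left _)
    (fun k => by
      refine Tendsto.mul (Tendsto.mul ?_ (hshift k)) tendsto_const_nhds
      simpa [sub_eq_add_neg] using hshift (-k))
    (Eventually.of_forall fun n k => by
      rw [norm_mul, norm_mul]
      have := (norm_nonneg _).trans (hC 0)
      gcongr
      · exact hC _
      · exact hC _)
  have h2n : Tendsto (fun n : ℕ => 2 * n) atTop atTop :=
    tendsto_id.const_mul_atTop' (by norm_num)
  have hlim2 := ((tendsto_pochInf z hq).mul (tendsto_pochInf (z⁻¹ * q) hq)).mul (hinv.comp h2n)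
  have heq := tendsto_nhds_unique hlim1
    (hlim2.congr fun n => ((hasSum_finite_triple hz hq0 hq n).tsum_eq).symm)
  rw [tsum_mul_left, ← jac] at heq
  have h1 : pochInf (-q) q * (pochInf (-q) q)⁻¹ = 1 := mul_inv_cancel₀ hE
  linear_combination (pochInf (-q) q) ^ 2 * heq -
    (jac z q * (pochInf (-q) q * (pochInf (-q) q)⁻¹ + 1) -
      pochInf (-q) q * pochInf z q * pochInf (z⁻¹ * q) q) * h1

/-! ### Product formulas at fifth roots of unity and for the base `q⁵` -/

theorem norm_pow_lt_one {q : ℂ} (hq : ‖q‖ < 1) {k : ℕ} (hk : k ≠ 0) : ‖q ^ k‖ < 1 := by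
  rw [norm_pow]
  exact pow_lt_one₀ (norm_nonneg _) hq hk

theorem pochInf_split_five {q : ℂ} (hq : ‖q‖ < 1) :
    pochInf q q = pochInf q (q ^ 5) * pochInf (q ^ 2) (q ^ 5) * pochInf (q ^ 3) (q ^ 5) *
      pochInf (q ^ 4) (q ^ 5) * pochInf (q ^ 5) (q ^ 5) := by
  have hq5 := norm_pow_lt_one hq (show 5 ≠ 0 by norm_num)
  have h5n : Tendsto (fun n : ℕ => 5 * n) atTop atTop :=
    tendsto_id.const_mul_atTop' (by norm_num)
  have h1 := (tendsto_pochInf q hq).comp h5n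
  have h2 := ((((tendsto_pochInf q hq5).mul (tendsto_pochInf (q ^ 2) hq5)).mul
    (tendsto_pochInf (q ^ 3) hq5)).mul (tendsto_pochInf (q ^ 4) hq5)).mul
    (tendsto_pochInf (q ^ 5) hq5)
  refine tendsto_nhds_unique h1 (h2.congr fun n => ?_)
  simp only [Function.comp]
  induction n with
  | zero => simp
  | succ n ih =>
    rw [show 5 * (n + 1) = 5 * n + 1 + 1 + 1 + 1 + 1 by ring]
    simp only [Finset.prod_range_succ]
    rw [← ih]
    ring

theorem pochInf_root_five {ζ q : ℂ} (hζ : IsPrimitiveRoot ζ 5) (hq : ‖q‖ < 1) :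
    pochInf q q * pochInf (ζ * q) q * pochInf (ζ ^ 2 * q) q * pochInf (ζ ^ 3 * q) q *
      pochInf (ζ ^ 4 * q) q = pochInf (q ^ 5) (q ^ 5) := by
  have hq5 := norm_pow_lt_one hq (show 5 ≠ 0 by norm_num)
  have h1 := ((((tendsto_pochInf q hq).mul (tendsto_pochInf (ζ * q) hq)).mul
    (tendsto_pochInf (ζ ^ 2 * q) hq)).mul (tendsto_pochInf (ζ ^ 3 * q) hq)).mul
    (tendsto_pochInf (ζ ^ 4 * q) hq)
  refine tendsto_nhds_unique h1 ((tendsto_pochInf (q ^ 5) hq5).congr fun n => ?_)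
  simp only [← Finset.prod_mul_distrib]
  refine Finset.prod_congr rfl fun i _ => ?_
  have hs : 1 + ζ + ζ ^ 2 + ζ ^ 3 + ζ ^ 4 = 0 := by
    have := hζ.geom_sum_eq_zero (by norm_num)
    simpa [Finset.sum_range_succ] using this
  rw [← pow_mul, mul_comm 5 i, pow_mul]
  generalize q ^ i = r
  linear_combination -((1 * ζ ^ 0) * (q * r) ^ 1
    + (1 * ζ ^ 1 + 1 * ζ ^ 3) * (q * r) ^ 2
    + (1 * ζ ^ 3 + 1 * ζ ^ 5) * (q * r) ^ 3
    + (1 * ζ ^ 6) * (q * r) ^ 4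
    + (-1 * ζ ^ 0 + 1 * ζ ^ 1 - 1 * ζ ^ 5 + 1 * ζ ^ 6) * (q * r) ^ 5) * hs

/-- The factor `ζ²` absorbs the constants `1 + ζ⁴` and `1 + ζ²` from the triple product:
`ζ² (1 + ζ⁴)(1 + ζ²) = -1`. -/
theorem jac_root_mul {ζ q : ℂ} (hζ : IsPrimitiveRoot ζ 5) (hq0 : q ≠ 0) (hq : ‖q‖ < 1) :
    ζ ^ 2 * (jac (ζ ^ 4) q * jac (ζ ^ 2) q) * pochInf q q =
      -(pochInf (-q) q ^ 2 * pochInf (q ^ 5) (q ^ 5)) := by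
  have hz : ζ ≠ 0 := hζ.ne_zero (by norm_num)
  have h5 := hζ.pow_eq_one
  have hs : 1 + ζ + ζ ^ 2 + ζ ^ 3 + ζ ^ 4 = 0 := by
    have := hζ.geom_sum_eq_zero (by norm_num)
    simpa [Finset.sum_range_succ] using this
  have i4 : (ζ ^ 4)⁻¹ = ζ := inv_eq_of_mul_eq_one_right (by rw [← h5]; ring)
  have i2 : (ζ ^ 2)⁻¹ = ζ ^ 3 :=
    inv_eq_of_mul_eq_one_right (by rw [← h5]; ring)
  rw [jac_eq_prod (pow_ne_zero 4 hz) hq0 hq, jac_eq_prod (pow_ne_zero 2 hz) hq0 hq, i4, i2,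
    pochInf_step (ζ ^ 4) hq, pochInf_step (ζ ^ 2) hq, ← pochInf_root_five hζ hq]
  have hc : ζ ^ 2 * ((1 + ζ ^ 4) * (1 + ζ ^ 2)) = -1 := by
    linear_combination hs + (ζ + ζ ^ 3) * h5
  linear_combination (pochInf (-q) q ^ 2 * (pochInf q q * pochInf (ζ * q) q *
    pochInf (ζ ^ 2 * q) q * pochInf (ζ ^ 3 * q) q * pochInf (ζ ^ 4 * q) q)) * hc

theorem jac_five_mul {q : ℂ} (hq0 : q ≠ 0) (hq : ‖q‖ < 1) :
    jac q (q ^ 5) * jac (q ^ 2) (q ^ 5) * pochInf (q ^ 5) (q ^ 5) =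
      pochInf (-q ^ 5) (q ^ 5) ^ 2 * pochInf q q := by
  have hq5 := norm_pow_lt_one hq (show 5 ≠ 0 by norm_num)
  rw [jac_eq_prod hq0 (pow_ne_zero 5 hq0) hq5,
    jac_eq_prod (pow_ne_zero 2 hq0) (pow_ne_zero 5 hq0) hq5, pochInf_split_five hq,
    show q⁻¹ * q ^ 5 = q ^ 4 by field_simp, show (q ^ 2)⁻¹ * q ^ 5 = q ^ 3 by field_simp]
  ring

/-! ### The two quadratic theta identities -/

/-- The part of `(∑ q^{x(x-1)/2})²` coming from the pairs with `2x + y ≡ k` modulo `5`. -/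
noncomputable def classSum (q : ℂ) (k : ℤ) : ℂ :=
  ∑' p : ℤ × ℤ, if (2 * p.1 + p.2) % 5 = k then q ^ (tri p.1 + tri p.2) else 0

theorem summable_tri_pair {q : ℂ} (hq0 : q ≠ 0) (hq : ‖q‖ < 1) :
    Summable fun p : ℤ × ℤ => ‖q ^ (tri p.1 + tri p.2)‖ := by
  have h := summable_jac one_ne_zero hq0 hq
  simp only [one_zpow, one_mul] at h
  exact (h.mul_norm h).congr fun p => by rw [pow_add]

theorem summable_class {q : ℂ} (hq0 : q ≠ 0) (hq : ‖q‖ < 1) (k : ℤ) :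
    Summable fun p : ℤ × ℤ =>
      if (2 * p.1 + p.2) % 5 = k then q ^ (tri p.1 + tri p.2) else 0 := by
  refine (summable_tri_pair hq0 hq).of_norm_bounded fun p => ?_
  split_ifs
  · exact le_rfl
  · rw [norm_zero]; exact norm_nonneg _

/-- Multiplication by `i` on the lattice of odd pairs `(2x - 1, 2y - 1)`. -/
def rotate : ℤ × ℤ ≃ ℤ × ℤ where
  toFun p := (1 - p.2, p.1)
  invFun p := (p.2, 1 - p.1)
  left_inv p := by simp
  right_inv p := by simp

/-- Rotation permutes the classes `0 → 2 → 3 → 1 → 0` and fixes the class `4`. -/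
theorem classSum_rotate (q : ℂ) {k l : ℤ} (hk : 0 ≤ k ∧ k < 5) (hl : l = (3 * k + 2) % 5) :
    classSum q l = classSum q k := by
  unfold classSum
  rw [← rotate.tsum_eq]
  refine tsum_congr fun p => ?_
  simp only [rotate, Equiv.coe_fn_mk, tri_one_sub]
  rw [add_comm (tri p.2)]
  exact if_congr (by omega) rfl rfl

theorem tri_lin (m n : ℤ) :
    tri (2 * m - n) + tri (m + 2 * n) = 5 * tri m + m + (5 * tri n + 2 * n) := by
  have h1 := two_mul_tri (2 * m - n)
  have h2 := two_mul_tri (m + 2 * n)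
  have h3 := two_mul_tri m
  have h4 := two_mul_tri n
  have : 2 * ((tri (2 * m - n) : ℤ) + tri (m + 2 * n)) =
      2 * (5 * tri m + m + (5 * tri n + 2 * n)) := by
    linear_combination h1 + h2 - 5 * h3 - 5 * h4
  omega

theorem tri_lin' (m n : ℤ) :
    tri (2 * m - n) + tri (m + 2 * n - 1) = 5 * tri m + 5 * tri n + 1 := by
  have h1 := two_mul_tri (2 * m - n)
  have h2 := two_mul_tri (m + 2 * n - 1)
  have h3 := two_mul_tri m
  have h4 := two_mul_tri n
  have : 2 * ((tri (2 * m - n) : ℤ) + tri (m + 2 * n - 1)) =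
      2 * (5 * tri m + 5 * tri n + 1) := by
    linear_combination h1 + h2 - 5 * h3 - 5 * h4
  omega

/-- A sum over one residue class, parametrised by an injection of `ℤ × ℤ` onto that class. -/
theorem classSum_eq_tsum (q : ℂ) (k : ℤ) (g : ℤ × ℤ → ℤ × ℤ) (hg : Function.Injective g)
    (hr : ∀ p : ℤ × ℤ, (2 * p.1 + p.2) % 5 = k ↔ p ∈ Set.range g) :
    classSum q k = ∑' p, q ^ (tri (g p).1 + tri (g p).2) := by
  unfold classSum
  rw [← hg.tsum_eq]
  · refine tsum_congr fun p => ?_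
    rw [if_pos ((hr _).2 ⟨p, rfl⟩)]
  · intro p hp
    rw [Function.mem_support] at hp
    by_contra hc
    exact hp (if_neg fun h => hc ((hr p).1 h))

theorem classSum_zero {q : ℂ} (hq0 : q ≠ 0) (hq : ‖q‖ < 1) :
    classSum q 0 = jac q (q ^ 5) * jac (q ^ 2) (q ^ 5) := by
  have hq5 := norm_pow_lt_one hq (show 5 ≠ 0 by norm_num)
  rw [classSum_eq_tsum q 0 (fun p => (2 * p.1 - p.2, p.1 + 2 * p.2))]
  · unfold jac
    rw [tsum_mul_tsum_of_summable_norm (summable_jac hq0 (pow_ne_zero 5 hq0) hq5)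
      (summable_jac (pow_ne_zero 2 hq0) (pow_ne_zero 5 hq0) hq5)]
    refine tsum_congr fun p => ?_
    rw [← zpow_natCast]
    push_cast
    rw [tri_lin, zpow_add₀ hq0, zpow_add₀ hq0, zpow_add₀ hq0, zpow_mul, zpow_mul, zpow_mul]
    simp only [zpow_natCast, zpow_ofNat]
    ring
  · rintro ⟨a, b⟩ ⟨c, d⟩ h
    simp only [Prod.mk.injEq] at h ⊢
    omega
  · rintro ⟨x, y⟩
    simp only [Set.mem_range, Prod.exists, Prod.mk.injEq]
    constructor
    · intro h
      exact ⟨(2 * x + y) / 5, (2 * y - x) / 5, by omega, by omega⟩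
    · rintro ⟨m, n, rfl, rfl⟩
      omega

theorem classSum_four {q : ℂ} (hq0 : q ≠ 0) (hq : ‖q‖ < 1) :
    classSum q 4 = q * jac 1 (q ^ 5) ^ 2 := by
  have hq5 := norm_pow_lt_one hq (show 5 ≠ 0 by norm_num)
  rw [classSum_eq_tsum q 4 (fun p => (2 * p.1 - p.2, p.1 + 2 * p.2 - 1))]
  · unfold jac
    rw [pow_two (∑' x : ℤ, _),
      tsum_mul_tsum_of_summable_norm (summable_jac one_ne_zero (pow_ne_zero 5 hq0) hq5)
      (summable_jac one_ne_zero (pow_ne_zero 5 hq0) hq5), ← tsum_mul_left]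
    refine tsum_congr fun p => ?_
    have h := tri_lin' p.1 p.2
    norm_cast at h
    rw [h, one_zpow, one_zpow]
    ring
  · rintro ⟨a, b⟩ ⟨c, d⟩ h
    simp only [Prod.mk.injEq] at h ⊢
    omega
  · rintro ⟨x, y⟩
    simp only [Set.mem_range, Prod.exists, Prod.mk.injEq]
    constructor
    · intro h
      exact ⟨(2 * x + y + 1) / 5, (2 * y - x + 2) / 5, by omega, by omega⟩
    · rintro ⟨m, n, rfl, rfl⟩
      omega

/-- Sorting the pairs `(x, y)` in the product by `2x + y` modulo `5`, where
`ζ^{4x} ζ^{2y} = ζ^{2(2x + y)}`. -/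
theorem jac_pair {ζ q : ℂ} (h5 : ζ ^ 5 = 1) (hz : ζ ≠ 0) (hq0 : q ≠ 0) (hq : ‖q‖ < 1) :
    jac (ζ ^ 4) q * jac (ζ ^ 2) q = classSum q 4 * ζ ^ 3 + classSum q 0 *
      (1 + ζ + ζ ^ 2 + ζ ^ 4) := by
  have e2 : classSum q 2 = classSum q 0 := classSum_rotate q (by norm_num) (by norm_num)
  have e3 : classSum q 3 = classSum q 2 := classSum_rotate q (by norm_num) (by norm_num)
  have e1 : classSum q 1 = classSum q 3 := classSum_rotate q (by norm_num) (by norm_num)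
  have key : jac (ζ ^ 4) q * jac (ζ ^ 2) q = classSum q 0 * ζ ^ 0 + classSum q 1 * ζ ^ 2 +
      classSum q 2 * ζ ^ 4 + classSum q 3 * ζ + classSum q 4 * ζ ^ 3 := by
    unfold jac
    rw [tsum_mul_tsum_of_summable_norm (summable_jac (pow_ne_zero 4 hz) hq0 hq)
      (summable_jac (pow_ne_zero 2 hz) hq0 hq)]
    have hs := summable_class hq0 hq
    refine (HasSum.tsum_eq ?_)
    have hsum := (((((hs 0).hasSum.mul_right (ζ ^ 0)).add ((hs 1).hasSum.mul_right (ζ ^ 2))).add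
      ((hs 2).hasSum.mul_right (ζ ^ 4))).add ((hs 3).hasSum.mul_right ζ)).add
      ((hs 4).hasSum.mul_right (ζ ^ 3))
    rw [show (fun p : ℤ × ℤ => (ζ ^ 4) ^ p.1 * q ^ tri p.1 * ((ζ ^ 2) ^ p.2 * q ^ tri p.2)) = _
      from ?_]
    · exact hsum
    · funext p
      obtain ⟨t, r, hr0, hr5, ht⟩ : ∃ t r : ℤ, 0 ≤ r ∧ r < 5 ∧ 2 * p.1 + p.2 = 5 * t + r :=
        ⟨(2 * p.1 + p.2) / 5, (2 * p.1 + p.2) % 5, by omega, by omega, by omega⟩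
      have hζp : (ζ ^ 4) ^ p.1 * (ζ ^ 2) ^ p.2 = (ζ ^ 2) ^ r := by
        have h52 : (ζ ^ 2) ^ (5 : ℤ) = 1 := by
          rw [zpow_ofNat, ← pow_mul, mul_comm, pow_mul, h5, one_pow]
        have hz2 : ζ ^ 2 ≠ 0 := pow_ne_zero 2 hz
        rw [show ζ ^ 4 = (ζ ^ 2) ^ (2 : ℤ) by rw [zpow_ofNat, ← pow_mul], ← zpow_mul,
          ← zpow_add₀ hz2, ht, zpow_add₀ hz2, zpow_mul, h52, one_zpow, one_mul]
      have hl : (ζ ^ 4) ^ p.1 * q ^ tri p.1 * ((ζ ^ 2) ^ p.2 * q ^ tri p.2) =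
          (ζ ^ 2) ^ r * q ^ (tri p.1 + tri p.2) := by
        rw [← hζp, pow_add]; ring
      have hr : (2 * p.1 + p.2) % 5 = r := by omega
      rw [hl, hr]
      have h6 : ζ ^ 6 = ζ := by linear_combination ζ * h5
      have h8 : ζ ^ 8 = ζ ^ 3 := by linear_combination ζ ^ 3 * h5
      interval_cases r <;> norm_num [← pow_mul, zpow_ofNat, h6, h8, mul_comm]
  rw [key, e1, e3, e2]
  ring

/-- Write `Θ`, `Θ₅` for `jac 1 q`, `jac 1 (q⁵)` and `S₀`, `S₄` for the class sums. The left side is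
`(Θ² - qΘ₅²)(Θ² - 5qΘ₅²)`, and since `Θ² = 4S₀ + S₄` and `qΘ₅² = S₄`, it equals
`16 S₀ (S₀ - S₄)`. Both class-sum factors are infinite products. -/
theorem theta_identity {q : ℂ} (hq0 : q ≠ 0) (hq : ‖q‖ < 1) :
    jac 1 q ^ 4 + 5 * q ^ 2 * jac 1 (q ^ 5) ^ 4 - 6 * q * jac 1 q ^ 2 * jac 1 (q ^ 5) ^ 2 =
      16 * (pochInf (-q) q ^ 2 * pochInf (-q ^ 5) (q ^ 5) ^ 2) := by
  have hq5 := norm_pow_lt_one hq (show 5 ≠ 0 by norm_num)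
  obtain ⟨ζ, hζ⟩ : ∃ ζ : ℂ, IsPrimitiveRoot ζ 5 :=
    ⟨_, Complex.isPrimitiveRoot_exp 5 (by norm_num)⟩
  have hz : ζ ≠ 0 := hζ.ne_zero (by norm_num)
  have h5 := hζ.pow_eq_one
  have hs : 1 + ζ + ζ ^ 2 + ζ ^ 3 + ζ ^ 4 = 0 := by
    have := hζ.geom_sum_eq_zero (by norm_num)
    simpa [Finset.sum_range_succ] using this
  have h1 := jac_pair (one_pow 5) one_ne_zero hq0 hq
  simp only [one_pow, mul_one, ← pow_two] at h1
  have h2 := jac_pair h5 hz hq0 hq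
  have h3 := jac_root_mul hζ hq0 hq
  have h4 := jac_five_mul hq0 hq
  have h6 := classSum_zero hq0 hq
  have h7 := classSum_four hq0 hq
  have hP : pochInf q q ≠ 0 := pochInf_ne_zero hq hq
  have hP5 : pochInf (q ^ 5) (q ^ 5) ≠ 0 := pochInf_ne_zero hq5 hq5
  -- `S₄ - S₀` is `ζ² jac(ζ⁴) jac(ζ²)`, which is a product by the triple product formula
  have h8 : (classSum q 0 - classSum q 4) * pochInf q q =
      pochInf (-q) q ^ 2 * pochInf (q ^ 5) (q ^ 5) := by
    have : ζ ^ 2 * (jac (ζ ^ 4) q * jac (ζ ^ 2) q) = classSum q 4 - classSum q 0 := by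
      rw [h2]
      linear_combination (classSum q 4 - classSum q 0) * h5 + ζ ^ 2 * classSum q 0 * hs
    rw [this] at h3
    linear_combination -h3
  rw [← h6] at h4
  -- multiplying by `S₀ = jac(q, q⁵) jac(q², q⁵)` cancels the quotients of products
  have h9 : classSum q 0 * (classSum q 0 - classSum q 4) =
      pochInf (-q) q ^ 2 * pochInf (-q ^ 5) (q ^ 5) ^ 2 := by
    refine mul_right_cancel₀ (mul_ne_zero hP hP5) ?_
    linear_combination (classSum q 0 * pochInf (q ^ 5) (q ^ 5)) * h8 +
      (pochInf (-q) q ^ 2 * pochInf (q ^ 5) (q ^ 5)) * h4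
  rw [← h9]
  have h10 : q * jac 1 (q ^ 5) ^ 2 = classSum q 4 := h7.symm
  have h11 : jac 1 q ^ 2 = classSum q 4 + 4 * classSum q 0 := by rw [h1]; ring
  linear_combination (jac 1 q ^ 2 + 4 * classSum q 0 + classSum q 4 - 6 * classSum q 4) * h11 +
    (5 * (q * jac 1 (q ^ 5) ^ 2 + classSum q 4) - 6 * jac 1 q ^ 2) * h10

/-! ### Comparison of coefficients -/

/-- Grouping the terms of a series of monomials by their exponent. -/
theorem hasSum_card_fiber {α : Type*} (E : α → ℕ) {q : ℂ} (h : Summable fun a => ‖q ^ E a‖) :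
    HasSum (fun n : ℕ => (Nat.card {a // E a = n} : ℂ) * q ^ n) (∑' a, q ^ E a) := by
  have h1 : HasSum (fun a => q ^ E a) (∑' a, q ^ E a) := h.of_norm.hasSum
  have h2 := (Equiv.sigmaFiberEquiv E).hasSum_iff.2 h1
  have h3 := h2.sigma fun n => (h2.summable.sigma_factor n).hasSum
  convert h3 using 2 with n
  have h4 : ∀ a : {a // E a = n},
      ((fun a => q ^ E a) ∘ (Equiv.sigmaFiberEquiv E)) ⟨n, a⟩ = q ^ n := by
    rintro ⟨a, rfl⟩
    rfl
  rw [tsum_congr h4, tsum_const, nsmul_eq_mul]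

theorem summable_norm_tri {q : ℂ} (hq0 : q ≠ 0) (hq : ‖q‖ < 1) :
    Summable fun x : ℤ => ‖q ^ tri x‖ := by
  simpa using summable_jac one_ne_zero hq0 hq

theorem jac_one (q : ℂ) : jac 1 q = ∑' x : ℤ, q ^ tri x := by simp [jac]

/-- The power series `P` converges absolutely at `q`, with value `v`. -/
def Evaluates (P : PowerSeries ℂ) (q v : ℂ) : Prop :=
  (Summable fun n => ‖PowerSeries.coeff n P * q ^ n‖) ∧
    HasSum (fun n => PowerSeries.coeff n P * q ^ n) v

theorem Evaluates.mul {P Q : PowerSeries ℂ} {q v w : ℂ} (hP : Evaluates P q v)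
    (hQ : Evaluates Q q w) : Evaluates (P * Q) q (v * w) := by
  have key : ∀ n, PowerSeries.coeff n (P * Q) * q ^ n =
      ∑ kl ∈ Finset.HasAntidiagonal.antidiagonal n, (PowerSeries.coeff kl.1 P * q ^ kl.1) *
        (PowerSeries.coeff kl.2 Q * q ^ kl.2) := by
    intro n
    rw [PowerSeries.coeff_mul, Finset.sum_mul]
    refine Finset.sum_congr rfl fun kl hkl => ?_
    rw [← Finset.HasAntidiagonal.mem_antidiagonal.1 hkl, pow_add]
    ring
  have h1 := summable_norm_sum_mul_antidiagonal_of_summable_norm hP.1 hQ.1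
  have h2 := tsum_mul_tsum_eq_tsum_sum_antidiagonal_of_summable_norm hP.1 hQ.1
  rw [hP.2.tsum_eq, hQ.2.tsum_eq] at h2
  simp only [Evaluates, key]
  exact ⟨h1, h2 ▸ h1.of_norm.hasSum⟩

theorem evaluates_theta {q : ℂ} (hq0 : q ≠ 0) (hq : ‖q‖ < 1) :
    Evaluates thetaSeries q (jac 1 q) := by
  have hcard : ∀ n, (Nat.card {x : ℤ // tri x = n} : ℂ) = PowerSeries.coeff n thetaSeries := by
    intro n
    rw [Nat.subtype_card (triFiber n) fun x => mem_triFiber, thetaSeries, PowerSeries.coeff_mk]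
  have h := hasSum_card_fiber tri (summable_norm_tri hq0 hq)
  simp only [hcard, ← jac_one] at h
  exact ⟨h.summable.norm, h⟩

theorem hasSum_theta_four {q : ℂ} (hq0 : q ≠ 0) (hq : ‖q‖ < 1) :
    HasSum (fun n : ℕ => (16 * ∑ d ∈ (2 * n + 1).divisors, (d : ℂ)) * q ^ n) (jac 1 q ^ 4) := by
  have h := evaluates_theta hq0 hq
  have h4 := ((h.mul h).mul (h.mul h)).2
  have e : thetaSeries * thetaSeries * (thetaSeries * thetaSeries) =
      PowerSeries.C (16 : ℂ) * sigmaSeries := by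
    rw [map_ofNat, ← theta_pow_four]
    ring
  rw [e] at h4
  simp only [PowerSeries.coeff_C_mul, sigmaSeries, PowerSeries.coeff_mk] at h4
  rwa [show jac 1 q ^ 4 = jac 1 q * jac 1 q * (jac 1 q * jac 1 q) by ring]

theorem tquad_eq (n : ℕ) : tquad 1 1 5 5 n =
    Nat.card {p : (ℤ × ℤ) × ℤ × ℤ //
      tri p.1.1 + tri p.1.2 + (5 * tri p.2.1 + 5 * tri p.2.2) = n} := by
  have htri : ∀ x : ℤ, x * (x - 1) / 2 = tri x := by
    intro x
    have := two_mul_tri x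
    omega
  refine Nat.card_congr ((Equiv.prodAssoc ℤ ℤ (ℤ × ℤ)).symm.subtypeEquiv fun p => ?_)
  simp only [htri, Equiv.prodAssoc_symm_apply]
  push_cast
  omega

theorem hasSum_tquad {q : ℂ} (hq0 : q ≠ 0) (hq : ‖q‖ < 1) :
    HasSum (fun n : ℕ => (tquad 1 1 5 5 n : ℂ) * q ^ n) (jac 1 q ^ 2 * jac 1 (q ^ 5) ^ 2) := by
  have h1 := summable_norm_tri hq0 hq
  have h5 := summable_norm_tri (pow_ne_zero 5 hq0) (norm_pow_lt_one hq (by norm_num : 5 ≠ 0))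
  have n1 := Summable.mul_norm (f := fun x : ℤ => q ^ tri x) h1 h1
  have n5 := Summable.mul_norm (f := fun x : ℤ => (q ^ 5) ^ tri x) h5 h5
  have e1 := tsum_mul_tsum_of_summable_norm h1 h1
  have e5 := tsum_mul_tsum_of_summable_norm h5 h5
  have n15 := Summable.mul_norm n1 n5
  have e15 := tsum_mul_tsum_of_summable_norm n1 n5
  rw [← e1, ← e5, ← jac_one, ← jac_one] at e15
  have hpow : ∀ p : (ℤ × ℤ) × ℤ × ℤ,
      q ^ tri p.1.1 * q ^ tri p.1.2 * ((q ^ 5) ^ tri p.2.1 * (q ^ 5) ^ tri p.2.2) =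
        q ^ (tri p.1.1 + tri p.1.2 + (5 * tri p.2.1 + 5 * tri p.2.2)) := by
    intro p
    simp only [pow_add, pow_mul]
  simp only [hpow] at n15 e15
  have h := hasSum_card_fiber _ n15
  rw [← e15] at h
  simp only [tquad_eq]
  convert h using 1
  ring

/-- A series in the powers `r ^ g n`, rewritten as a power series in `r`. -/
theorem hasSum_extend_mul_pow {a : ℕ → ℂ} {g : ℕ → ℕ} (hg : Function.Injective g) {r v : ℂ}
    (h : HasSum (fun n => a n * r ^ g n) v) :
    HasSum (fun k => Function.extend g a 0 k * r ^ k) v := by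
  refine (hg.hasSum_iff fun k hk => ?_).1 ?_
  · rw [Function.extend_apply' _ _ _ (by simpa using hk)]
    simp
  · simpa [Function.comp_def, hg.extend_apply] using h

/-- A power series that vanishes on the unit disc has zero coefficients. -/
theorem eq_zero_of_hasSum {d : ℕ → ℂ}
    (h : ∀ r : ℂ, ‖r‖ < 1 → HasSum (fun k => d k * r ^ k) 0) (k : ℕ) : d k = 0 := by
  have hp : HasFPowerSeriesAt (0 : ℂ → ℂ) (FormalMultilinearSeries.ofScalars ℂ d) 0 := by
    rw [hasFPowerSeriesAt_iff]
    filter_upwards [Metric.ball_mem_nhds (0 : ℂ) one_pos] with z hz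
    simpa [FormalMultilinearSeries.coeff_ofScalars, mul_comm] using h z (by simpa using hz)
  have := congrArg (fun p => FormalMultilinearSeries.coeff p k) hp.eq_zero
  rw [FormalMultilinearSeries.coeff_ofScalars] at this
  rw [this]
  rfl

theorem eta_product {r : ℂ} (hr : ‖r‖ < 1) :
    ∏' k : ℕ, ((1 - r ^ (2 * (k + 1))) ^ 2 * (1 - r ^ (10 * (k + 1))) ^ 2) =
      pochInf (-r ^ 2) (r ^ 2) ^ 2 * pochInf (-(r ^ 2) ^ 5) ((r ^ 2) ^ 5) ^ 2 := by
  have hq : ‖r ^ 2‖ < 1 := norm_pow_lt_one hr two_ne_zero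
  have hA := (multipliable_pochInf (-r ^ 2) hq).hasProd
  have hq5 : ‖(r ^ 2) ^ 5‖ < 1 := norm_pow_lt_one hq (by norm_num)
  have hB := (multipliable_pochInf (-(r ^ 2) ^ 5) hq5).hasProd
  have h := ((hA.mul hA).mul (hB.mul hB)).tprod_eq
  simp only [← pow_two] at h
  rw [pochInf, pochInf, ← h]
  refine tprod_congr fun k => ?_
  ring

/-- `16 c(N) = 16 σ(N) + 80 σ(N / 5) - 6 t(n)` for `N = 2n + 3`, where `σ(N / 5)` is read as zero
when `5 ∤ N`; that term is encoded by `Function.extend`, as the odd multiples of `5` are the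
numbers `10m + 5 = 5(2m + 1)`. -/
theorem coeff_identity {c : ℕ → ℤ}
    (hc : ∀ q : ℂ, ‖q‖ < 1 →
      ∑' k : ℕ, (c k : ℂ) * q ^ k =
        q * ∏' k : ℕ, ((1 - q ^ (2 * (k + 1))) ^ 2 * (1 - q ^ (10 * (k + 1))) ^ 2)) (n : ℕ) :
    16 * (c (2 * n + 3) : ℂ) = 16 * ∑ d ∈ (2 * n + 3).divisors, (d : ℂ) +
      5 * Function.extend (fun m : ℕ => 10 * m + 5)
        (fun m : ℕ => 16 * ∑ d ∈ (2 * m + 1).divisors, (d : ℂ)) 0 (2 * n + 3) -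
      6 * (tquad 1 1 5 5 n : ℂ) := by
  have i1 : Function.Injective fun m : ℕ => 2 * m + 1 := fun a b h => by simpa using h
  have i3 : Function.Injective fun m : ℕ => 2 * m + 3 := fun a b h => by simpa using h
  have i5 : Function.Injective fun m : ℕ => 10 * m + 5 := fun a b h => by simpa using h
  set s : ℕ → ℂ := fun m => 16 * ∑ d ∈ (2 * m + 1).divisors, (d : ℂ) with hs
  set t : ℕ → ℂ := fun m => (tquad 1 1 5 5 m : ℂ) with ht
  set A := Function.extend (fun m : ℕ => 2 * m + 1) s 0 with hA
  set B := Function.extend (fun m : ℕ => 10 * m + 5) s 0 with hB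
  set T := Function.extend (fun m : ℕ => 2 * m + 3) t 0 with hT
  have key : ∀ k, 16 * (c k : ℂ) - (A k + 5 * B k - 6 * T k) = 0 := by
    refine eq_zero_of_hasSum fun r hr => ?_
    rcases eq_or_ne r 0 with rfl | hr0
    · have c0 : (c 0 : ℂ) = 0 := by
        have := hc 0 (by simp)
        rwa [tsum_eq_single 0 (by intro k hk; simp [hk]), zero_mul, pow_zero, mul_one] at this
      have A0 : A 0 = 0 := Function.extend_apply' _ _ _ (by simp)
      have B0 : B 0 = 0 := Function.extend_apply' _ _ _ (by simp)
      have T0 : T 0 = 0 := Function.extend_apply' _ _ _ (by simp)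
      convert hasSum_zero (α := ℂ) (β := ℕ) using 2 with k
      rcases eq_or_ne k 0 with rfl | hk
      · simp [c0, A0, B0, T0]
      · simp [hk]
    have hq : ‖r ^ 2‖ < 1 := norm_pow_lt_one hr two_ne_zero
    have hq5 : ‖(r ^ 2) ^ 5‖ < 1 := norm_pow_lt_one hq (by norm_num)
    have hq0 : r ^ 2 ≠ 0 := pow_ne_zero _ hr0
    have hAs : HasSum (fun k => A k * r ^ k) (r * jac 1 (r ^ 2) ^ 4) := by
      have h := (hasSum_theta_four hq0 hq).mul_left r
      refine hasSum_extend_mul_pow i1 ?_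
      refine (congrArg (fun f => HasSum f _) (funext fun m => ?_)).mp h
      ring
    have hBs : HasSum (fun k => B k * r ^ k) (r ^ 5 * jac 1 ((r ^ 2) ^ 5) ^ 4) := by
      have h := (hasSum_theta_four (pow_ne_zero 5 hq0) hq5).mul_left (r ^ 5)
      refine hasSum_extend_mul_pow i5 ?_
      refine (congrArg (fun f => HasSum f _) (funext fun m => ?_)).mp h
      ring
    have hTs : HasSum (fun k => T k * r ^ k)
        (r ^ 3 * (jac 1 (r ^ 2) ^ 2 * jac 1 ((r ^ 2) ^ 5) ^ 2)) := by
      have h := (hasSum_tquad hq0 hq).mul_left (r ^ 3)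
      refine hasSum_extend_mul_pow i3 ?_
      refine (congrArg (fun f => HasSum f _) (funext fun m => ?_)).mp h
      ring
    have hval := hc r hr
    rw [eta_product hr] at hval
    have hne : r * (pochInf (-r ^ 2) (r ^ 2) ^ 2 * pochInf (-(r ^ 2) ^ 5) ((r ^ 2) ^ 5) ^ 2) ≠ 0 :=
      mul_ne_zero hr0 (mul_ne_zero
        (pow_ne_zero 2 (pochInf_ne_zero hq (by rwa [norm_neg])))
        (pow_ne_zero 2 (pochInf_ne_zero hq5 (by rwa [norm_neg]))))
    -- the hypothesis gives a nonzero value to the `tsum` of `c k * r ^ k`, which is therefore not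
    -- the junk value `0` of a divergent series
    have hcs : Summable fun k => (c k : ℂ) * r ^ k := by
      by_contra hns
      exact hne (by rw [← hval, tsum_eq_zero_of_not_summable hns])
    have hC := hcs.hasSum
    rw [hval] at hC
    have hsum := (hC.mul_left 16).sub ((hAs.add (hBs.mul_left 5)).sub (hTs.mul_left 6))
    refine (congrArg₂ (fun f v => HasSum f v) ?_ ?_).mp hsum
    · funext k
      ring
    · linear_combination -r * theta_identity hq0 hq
  have h := key (2 * n + 3)
  have hAn : A (2 * n + 3) = 16 * ∑ d ∈ (2 * n + 3).divisors, (d : ℂ) :=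
    i1.extend_apply s 0 (n + 1)
  have hTn : T (2 * n + 3) = tquad 1 1 5 5 n := i3.extend_apply t 0 n
  rw [hAn, hTn] at h
  linear_combination h

/-- `4 σ(5^β n₁) = (5^{β+1} - 1) σ(n₁)`, written without subtraction. -/
theorem sum_divisors_five_pow_mul {n₁ : ℕ} (h5 : ¬ 5 ∣ n₁) (β : ℕ) :
    4 * ∑ d ∈ (5 ^ β * n₁).divisors, d + ∑ d ∈ n₁.divisors, d =
      5 ^ (β + 1) * ∑ d ∈ n₁.divisors, d := by
  have hcop : Nat.Coprime (5 ^ β) n₁ :=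
    Nat.Coprime.pow_left _ ((Nat.Prime.coprime_iff_not_dvd Nat.prime_five).2 h5)
  have hgeom : 4 * ∑ d ∈ (5 ^ β).divisors, d + 1 = 5 ^ (β + 1) := by
    rw [Nat.sum_divisors_prime_pow Nat.prime_five]
    clear hcop
    induction β with
    | zero => simp
    | succ b ih =>
      rw [Finset.sum_range_succ, pow_succ 5 (b + 1)]
      omega
  rw [hcop.sum_divisors_mul, ← hgeom]
  ring

theorem stmt_11 (n : ℕ) (hn : 0 < n) (β n₁ : ℕ) (hn₁ : 0 < n₁) (h5 : ¬ 5 ∣ n₁)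
    (hfac : 2 * n + 3 = 5 ^ β * n₁) (c : ℕ → ℤ)
    (hc : ∀ q : ℂ, ‖q‖ < 1 →
      ∑' k : ℕ, (c k : ℂ) * q ^ k =
        q * ∏' k : ℕ, ((1 - q ^ (2 * (k + 1))) ^ 2 * (1 - q ^ (10 * (k + 1))) ^ 2)) :
    (tquad 1 1 5 5 n : ℚ) =
      4 / 3 * ((5 : ℚ) ^ (β + 1) - 3) * ∑ d ∈ n₁.divisors, (d : ℚ) -
        8 / 3 * c (2 * n + 3) := by
  have h := coeff_identity hc n
  have hσ := sum_divisors_five_pow_mul h5 β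
  rw [← hfac] at hσ
  have hcast := congrArg (Nat.cast : ℕ → ℂ) hσ
  push_cast at hcast
  -- for `5 ∣ N` the value `σ(N / 5)` comes from the divisor sum with `β - 1` in place of `β`
  have goal : (tquad 1 1 5 5 n : ℂ) =
      4 / 3 * ((5 : ℂ) ^ (β + 1) - 3) * ∑ d ∈ n₁.divisors, (d : ℂ) -
        8 / 3 * c (2 * n + 3) := by
    cases β with
    | zero =>
      rw [Function.extend_apply'] at h
      · simp only [Pi.zero_apply] at h
        linear_combination (1 / 6) * h + (2 / 3) * hcast
      · rintro ⟨m, hm⟩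
        apply h5
        simp only [pow_zero, one_mul] at hfac
        omega
    | succ b =>
      rw [pow_succ] at hfac
      obtain ⟨m, hm⟩ : ∃ m, 5 ^ b * n₁ = 2 * m + 1 := by
        refine ⟨5 ^ b * n₁ / 2, ?_⟩
        have : 5 ^ b * 5 * n₁ = 5 * (5 ^ b * n₁) := by ring
        omega
      have hnm : 2 * n + 3 = 10 * m + 5 := by
        have : 5 ^ b * 5 * n₁ = 5 * (5 ^ b * n₁) := by ring
        omega
      have i5 : Function.Injective fun m : ℕ => 10 * m + 5 := fun a b h => by simpa using h
      have hext : Function.extend (fun m : ℕ => 10 * m + 5)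
          (fun m : ℕ => 16 * ∑ d ∈ (2 * m + 1).divisors, (d : ℂ)) 0 (2 * n + 3) =
          16 * ∑ d ∈ (2 * m + 1).divisors, (d : ℂ) := by
        rw [hnm]
        exact i5.extend_apply _ 0 m
      have hb := congrArg (Nat.cast : ℕ → ℂ) (sum_divisors_five_pow_mul h5 b)
      rw [hm] at hb
      push_cast at hb
      rw [hext] at h
      linear_combination (1 / 6) * h + (2 / 3) * hcast + (10 / 3) * hb
  apply Rat.cast_injective (α := ℂ)
  push_cast
  exact goal
end

section
/- Let n be a positive integer. Then t(1,1,5,5;n) = N(1,1,5,5; 8n+12) − N(1,1,5,5; 2n+3). -/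
/-!
Put `m = 2 * n + 3`, so that `8 * n + 12 = 4 * m`. Modulo `4` a square is `0` or `1` according to
parity and `5 ≡ 1`, so in a solution of `4 * m = x² + y² + 5 z² + 5 w²` the number of odd
coordinates is `0` or `4` (`all_odd_or_all_even`). Halving turns the all-even solutions into the
representations of `m`. Since `(2 * x - 1)² = 8 * (x (x - 1) / 2) + 1`, the substitution
`x ↦ 2 * x - 1` in every coordinate turns the quadruples counted by `tquad 1 1 5 5 n` into the
all-odd solutions. Hence `N(4 m) = t(n) + N(m)`.
-/

open scoped BigOperators

/-- The sum of squares is congruent modulo `4` to the number of odd coordinates. -/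
lemma all_odd_or_all_even {M x y z w : ℤ} (h : 4 * M = x ^ 2 + y ^ 2 + 5 * z ^ 2 + 5 * w ^ 2) :
    (∃ a b c d : ℤ, x = 2 * a - 1 ∧ y = 2 * b - 1 ∧ z = 2 * c - 1 ∧ w = 2 * d - 1) ∨
      ∃ a b c d : ℤ, x = 2 * a ∧ y = 2 * b ∧ z = 2 * c ∧ w = 2 * d := by
  have key : ∀ u : ℤ, (∃ a, u = 2 * a ∧ u ^ 2 % 4 = 0) ∨ ∃ a, u = 2 * a - 1 ∧ u ^ 2 % 4 = 1 := by
    intro u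
    rcases Int.even_or_odd' u with ⟨k, rfl | rfl⟩
    · exact Or.inl ⟨k, rfl, by ring_nf; omega⟩
    · exact Or.inr ⟨k + 1, by ring, by ring_nf; omega⟩
  rcases key x with ⟨a, ha, ha'⟩ | ⟨a, ha, ha'⟩ <;> rcases key y with ⟨b, hb, hb'⟩ | ⟨b, hb, hb'⟩ <;>
    rcases key z with ⟨c, hc, hc'⟩ | ⟨c, hc, hc'⟩ <;>
    rcases key w with ⟨d, hd, hd'⟩ | ⟨d, hd, hd'⟩ <;>
    first
    | exact Or.inl ⟨a, b, c, d, ha, hb, hc, hd⟩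
    | exact Or.inr ⟨a, b, c, d, ha, hb, hc, hd⟩
    | (exfalso; omega)

/-- The integer division in the triangular number `x (x - 1) / 2` is exact. -/
lemma odd_sq_eq_triangular (x : ℤ) : (2 * x - 1) ^ 2 = 8 * (x * (x - 1) / 2) + 1 := by
  have h : 2 * (x * (x - 1) / 2) = x * (x - 1) :=
    Int.mul_ediv_cancel' (Int.even_mul_pred_self x).two_dvd
  linarith

/-- Finiteness is needed because `Nat.card` of an infinite type is `0`. -/
lemma finite_reps (M : ℤ) : Finite {p : ℤ × ℤ × ℤ × ℤ //
    M = p.1 ^ 2 + p.2.1 ^ 2 + 5 * p.2.2.1 ^ 2 + 5 * p.2.2.2 ^ 2} := by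
  have hI := Set.finite_Icc (-M) M
  refine Set.Finite.subset (hI.prod (hI.prod (hI.prod hI))) ?_
  rintro ⟨x, y, z, w⟩ (h : M = x ^ 2 + y ^ 2 + 5 * z ^ 2 + 5 * w ^ 2)
  have hx := Int.le_self_sq x
  have hy := Int.le_self_sq y
  have hz := Int.le_self_sq z
  have hw := Int.le_self_sq w
  have hx' := Int.le_self_sq (-x)
  have hy' := Int.le_self_sq (-y)
  have hz' := Int.le_self_sq (-z)
  have hw' := Int.le_self_sq (-w)
  rw [neg_sq] at hx' hy' hz' hw'
  have := sq_nonneg x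
  have := sq_nonneg y
  have := sq_nonneg z
  have := sq_nonneg w
  simp only [Set.mem_prod, Set.mem_Icc]
  refine ⟨⟨?_, ?_⟩, ⟨?_, ?_⟩, ⟨?_, ?_⟩, ?_, ?_⟩ <;> linarith

theorem stmt_12 (n : ℕ) (hn : 0 < n) :
    (tquad 1 1 5 5 n : ℤ) = Nquad 1 1 5 5 (8 * n + 12) - Nquad 1 1 5 5 (2 * n + 3) := by
  unfold tquad Nquad
  push_cast
  simp only [one_mul]
  let T := {p : ℤ × ℤ × ℤ × ℤ // (n : ℤ) = p.1 * (p.1 - 1) / 2 + p.2.1 * (p.2.1 - 1) / 2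
      + 5 * (p.2.2.1 * (p.2.2.1 - 1) / 2) + 5 * (p.2.2.2 * (p.2.2.2 - 1) / 2)}
  let R (M : ℤ) := {p : ℤ × ℤ × ℤ × ℤ //
    M = p.1 ^ 2 + p.2.1 ^ 2 + 5 * p.2.2.1 ^ 2 + 5 * p.2.2.2 ^ 2}
  let f : T → R (8 * n + 12) := fun p =>
    ⟨(2 * p.1.1 - 1, 2 * p.1.2.1 - 1, 2 * p.1.2.2.1 - 1, 2 * p.1.2.2.2 - 1), by
      have := p.2
      simp only [odd_sq_eq_triangular]
      linarith⟩
  let g : R (2 * n + 3) → R (8 * n + 12) := fun p =>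
    ⟨(2 * p.1.1, 2 * p.1.2.1, 2 * p.1.2.2.1, 2 * p.1.2.2.2), by
      have := p.2
      simp only [mul_pow]
      linarith⟩
  have hf : Function.Injective f := by
    rintro ⟨⟨x, y, z, w⟩, h⟩ ⟨⟨x', y', z', w'⟩, h'⟩ e
    have e := congrArg Subtype.val e
    refine Subtype.ext ?_
    simp only [f, Prod.mk.injEq] at e ⊢
    omega
  have hg : Function.Injective g := by
    rintro ⟨⟨x, y, z, w⟩, h⟩ ⟨⟨x', y', z', w'⟩, h'⟩ e
    have e := congrArg Subtype.val e
    refine Subtype.ext ?_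
    simp only [g, Prod.mk.injEq] at e ⊢
    omega
  have hfg : ∀ a b, f a ≠ g b := by
    rintro ⟨⟨x, y, z, w⟩, h⟩ ⟨⟨x', y', z', w'⟩, h'⟩ e
    have e := congrArg Subtype.val e
    simp only [f, g, Prod.mk.injEq] at e
    omega
  have hsurj : Function.Surjective (Sum.elim f g) := by
    rintro ⟨⟨x, y, z, w⟩, h⟩
    simp only at h
    rcases all_odd_or_all_even (M := 2 * n + 3) (x := x) (y := y) (z := z) (w := w)
        (by linarith) with
      ⟨a, b, c, d, rfl, rfl, rfl, rfl⟩ | ⟨a, b, c, d, rfl, rfl, rfl, rfl⟩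
    · refine ⟨Sum.inl ⟨(a, b, c, d), ?_⟩, rfl⟩
      simp only [odd_sq_eq_triangular] at h
      linarith
    · refine ⟨Sum.inr ⟨(a, b, c, d), ?_⟩, rfl⟩
      simp only [mul_pow] at h
      linarith
  have : Finite (R (8 * n + 12)) := finite_reps _
  have : Finite T := Finite.of_injective f hf
  have : Finite (R (2 * n + 3)) := Finite.of_injective g hg
  have hcard : Nat.card T + Nat.card (R (2 * n + 3)) = Nat.card (R (8 * n + 12)) := by
    rw [← Nat.card_sum]
    exact Nat.card_eq_of_bijective _ ⟨hf.sumElim hg hfg, hsurj⟩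
  exact eq_sub_of_add_eq (by exact_mod_cast hcard)
end

section
/- Let n be a positive integer. Then t(1,5,5,5;n) = N(1,5,5,5; 8n+16) − N(1,5,5,5; 2n+4). -/
/-!
Multiplying by `8` and completing squares, a representation of `n` by triangular numbers
becomes a representation `8n + 16 = x² + 5y² + 5z² + 5w²` with `x, y, z, w` all odd, via
`x ↦ 2x - 1` in each coordinate. Modulo `4` the form `x² + 5y² + 5z² + 5w²` is congruent to the
number of odd variables, so in any representation of `8n + 16` the variables are all odd or all
even (`parity`). The all-even ones correspond to representations of `(8n + 16) / 4 = 2n + 4` via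
`x ↦ 2x`. All solution sets are finite, so counting gives the identity.
-/

open scoped BigOperators

/-- The integer solutions of `x² + 5y² + 5z² + 5w² = m`. -/
def solSet (m : ℤ) : Set (ℤ × ℤ × ℤ × ℤ) :=
  {p | m = p.1 ^ 2 + 5 * p.2.1 ^ 2 + 5 * p.2.2.1 ^ 2 + 5 * p.2.2.2 ^ 2}

/-- The integer solutions of `x(x-1)/2 + 5y(y-1)/2 + 5z(z-1)/2 + 5w(w-1)/2 = m`. -/
def triSet (m : ℤ) : Set (ℤ × ℤ × ℤ × ℤ) :=
  {p | m = p.1 * (p.1 - 1) / 2 + 5 * (p.2.1 * (p.2.1 - 1) / 2)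
      + 5 * (p.2.2.1 * (p.2.2.1 - 1) / 2) + 5 * (p.2.2.2 * (p.2.2.2 - 1) / 2)}

lemma Nquad_eq (m : ℕ) : Nquad 1 5 5 5 m = (solSet m).ncard := by
  simp only [Nquad, Nat.cast_one, Nat.cast_ofNat, one_mul]
  exact Nat.card_coe_set_eq (solSet m)

lemma tquad_eq_s14 (m : ℕ) : tquad 1 5 5 5 m = (triSet m).ncard := by
  simp only [tquad, Nat.cast_one, Nat.cast_ofNat, one_mul]
  exact Nat.card_coe_set_eq (triSet m)

lemma solSet_finite (m : ℤ) : (solSet m).Finite := by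
  refine (Set.finite_Icc ((-m, -m, -m, -m) : ℤ × ℤ × ℤ × ℤ) (m, m, m, m)).subset ?_
  rintro ⟨x, y, z, w⟩ h
  have h : m = x ^ 2 + 5 * y ^ 2 + 5 * z ^ 2 + 5 * w ^ 2 := h
  have key : ∀ a : ℤ, a ≤ a ^ 2 ∧ -a ≤ a ^ 2 := fun a =>
    ⟨Int.le_self_sq a, by simpa using Int.le_self_sq (-a)⟩
  have hx := key x
  have hy := key y
  have hz := key z
  have hw := key w
  have := sq_nonneg x
  have := sq_nonneg y
  have := sq_nonneg z
  have := sq_nonneg w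
  simp only [Set.mem_Icc, Prod.mk_le_mk]
  refine ⟨⟨?_, ?_, ?_, ?_⟩, ?_, ?_, ?_, ?_⟩ <;> linarith

/-- The division in a triangular number is exact. -/
lemma eight_tri (x : ℤ) : 8 * (x * (x - 1) / 2) = (2 * x - 1) ^ 2 - 1 := by
  have h : 2 * (x * (x - 1) / 2) = x * (x - 1) :=
    Int.mul_ediv_cancel' (even_iff_two_dvd.mp (Int.even_mul_pred_self x))
  linear_combination 4 * h

/-- If `4` divides `x² + 5y² + 5z² + 5w²`, the variables all have the same parity. -/
lemma parity {x y z w m : ℤ} (h : 4 * m = x ^ 2 + 5 * y ^ 2 + 5 * z ^ 2 + 5 * w ^ 2) :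
    (Even x ∧ Even y ∧ Even z ∧ Even w) ∨ (Odd x ∧ Odd y ∧ Odd z ∧ Odd w) := by
  have key : ∀ a : ℤ, (Even a ∧ a ^ 2 % 4 = 0) ∨ (Odd a ∧ a ^ 2 % 4 = 1) := fun a => by
    rcases Int.even_or_odd a with ha | ha
    · obtain ⟨b, rfl⟩ := ha
      exact Or.inl ⟨⟨b, rfl⟩, by ring_nf; omega⟩
    · obtain ⟨b, rfl⟩ := ha
      exact Or.inr ⟨⟨b, rfl⟩, by ring_nf; omega⟩
  rcases key x with ⟨hx, hx'⟩ | ⟨hx, hx'⟩ <;> rcases key y with ⟨hy, hy'⟩ | ⟨hy, hy'⟩ <;>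
  rcases key z with ⟨hz, hz'⟩ | ⟨hz, hz'⟩ <;> rcases key w with ⟨hw, hw'⟩ | ⟨hw, hw'⟩ <;>
  first
  | exact Or.inl ⟨hx, hy, hz, hw⟩
  | exact Or.inr ⟨hx, hy, hz, hw⟩
  | (exfalso; omega)

/-- `x ↦ 2x - 1` in each coordinate, a bijection onto the quadruples of odd integers. -/
def toOdd (p : ℤ × ℤ × ℤ × ℤ) : ℤ × ℤ × ℤ × ℤ :=
  (2 * p.1 - 1, 2 * p.2.1 - 1, 2 * p.2.2.1 - 1, 2 * p.2.2.2 - 1)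

/-- `x ↦ 2x` in each coordinate, a bijection onto the quadruples of even integers. -/
def toEven (p : ℤ × ℤ × ℤ × ℤ) : ℤ × ℤ × ℤ × ℤ :=
  (2 * p.1, 2 * p.2.1, 2 * p.2.2.1, 2 * p.2.2.2)

lemma toOdd_injective : Function.Injective toOdd := by
  rintro ⟨x, y, z, w⟩ ⟨x', y', z', w'⟩ h
  simp only [toOdd, Prod.mk.injEq] at h ⊢
  omega

lemma toEven_injective : Function.Injective toEven := by
  rintro ⟨x, y, z, w⟩ ⟨x', y', z', w'⟩ h
  simp only [toEven, Prod.mk.injEq] at h ⊢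
  omega

lemma toOdd_mem_iff (m : ℤ) (p : ℤ × ℤ × ℤ × ℤ) :
    toOdd p ∈ solSet (8 * m + 16) ↔ p ∈ triSet m := by
  obtain ⟨x, y, z, w⟩ := p
  have hx := eight_tri x
  have hy := eight_tri y
  have hz := eight_tri z
  have hw := eight_tri w
  simp only [toOdd, solSet, triSet, Set.mem_ofPred_eq]
  constructor <;> intro h <;> linarith

lemma toEven_mem_iff (m : ℤ) (p : ℤ × ℤ × ℤ × ℤ) :
    toEven p ∈ solSet (8 * m + 16) ↔ p ∈ solSet (2 * m + 4) := by
  simp only [toEven, solSet, Set.mem_ofPred_eq, mul_pow]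
  constructor <;> intro h <;> linarith

lemma solSet_eq_union (m : ℤ) :
    solSet (8 * m + 16) = toOdd '' triSet m ∪ toEven '' solSet (2 * m + 4) := by
  ext p
  constructor
  · intro hp
    have h : 4 * (2 * m + 4) = p.1 ^ 2 + 5 * p.2.1 ^ 2 + 5 * p.2.2.1 ^ 2 + 5 * p.2.2.2 ^ 2 := by
      rw [← show 8 * m + 16 = _ from hp]
      ring
    rcases parity h with ⟨⟨a, ha⟩, ⟨b, hb⟩, ⟨c, hc⟩, ⟨d, hd⟩⟩ | ⟨⟨a, ha⟩, ⟨b, hb⟩, ⟨c, hc⟩, ⟨d, hd⟩⟩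
    · have e : toEven (a, b, c, d) = p := by
        simp only [toEven, Prod.ext_iff]
        omega
      exact Or.inr ⟨_, (toEven_mem_iff m _).mp (e ▸ hp), e⟩
    · have e : toOdd (a + 1, b + 1, c + 1, d + 1) = p := by
        simp only [toOdd, Prod.ext_iff]
        omega
      exact Or.inl ⟨_, (toOdd_mem_iff m _).mp (e ▸ hp), e⟩
  · rintro (⟨q, hq, rfl⟩ | ⟨q, hq, rfl⟩)
    · exact (toOdd_mem_iff m q).mpr hq
    · exact (toEven_mem_iff m q).mpr hq

lemma disjoint_images (s t : Set (ℤ × ℤ × ℤ × ℤ)) : Disjoint (toOdd '' s) (toEven '' t) := by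
  rw [Set.disjoint_left]
  rintro _ ⟨p, -, rfl⟩ ⟨q, -, h⟩
  have h1 := congrArg Prod.fst h
  simp only [toOdd, toEven] at h1
  omega

theorem stmt_14 (n : ℕ) (hn : 0 < n) :
    (tquad 1 5 5 5 n : ℤ) = Nquad 1 5 5 5 (8 * n + 16) - Nquad 1 5 5 5 (2 * n + 4) := by
  have hfin := solSet_finite (8 * (n : ℤ) + 16)
  have hU := solSet_eq_union (n : ℤ)
  have hcard : (solSet (8 * (n : ℤ) + 16)).ncard =
      (triSet n).ncard + (solSet (2 * (n : ℤ) + 4)).ncard := by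
    rw [hU] at hfin ⊢
    rw [Set.ncard_union_eq (disjoint_images _ _) (hfin.subset Set.subset_union_left)
      (hfin.subset Set.subset_union_right), Set.ncard_image_of_injective _ toOdd_injective,
      Set.ncard_image_of_injective _ toEven_injective]
  rw [tquad_eq_s14, Nquad_eq, Nquad_eq]
  push_cast
  rw [hcard]
  push_cast
  ring
end
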